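/- Let T ≥ 2 be a natural number and ε > 0, and let F be the cumulative distribution function of the chi-square distribution with T − 1 degrees of freedom. Then (1 − F((ε/n)^{2/T}))^n → 0 as n → ∞. -/

import Mathlib

open MeasureTheory ProbabilityTheory Filter

/-- The chi-square distribution with `k` degrees of freedom (`k` a real parameter):
the Gamma distribution with shape `k/2` and rate `1/2`. -/
noncomputable def chiSqMeasure (k : ℝ) : Measure ℝ :=
  gammaMeasure (k / 2) (1 / 2)

/-- The cumulative distribution function of the chi-square distribution with `k`
degrees of freedom. -/
noncomputable def chiSqCDF (k : ℝ) (u : ℝ) : ℝ :=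
  (chiSqMeasure k (Set.Iic u)).toReal

theorem chi_lower (a : ℝ) (ha : 0 < a) : ∃ c : ℝ, 0 < c ∧ ∀ u : ℝ, 0 < u → u ≤ 1 →
    c * u ^ a ≤ (gammaMeasure a (1 / 2) (Set.Iic u)).toReal := by
  have hG := Real.Gamma_pos_of_pos ha
  refine ⟨(1 / 2 : ℝ) ^ a / Real.Gamma a * Real.exp (-(1 / 2)) * (1 / 2 : ℝ) ^ a * (1 / 2),
    by positivity, ?_⟩
  intro u hu hu1
  have : IsProbabilityMeasure (gammaMeasure a (1 / 2)) :=
    isProbabilityMeasure_gammaMeasure ha (by norm_num)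
  rw [← ENNReal.ofReal_le_iff_le_toReal (measure_ne_top _ _)]
  set K : ℝ := (1 / 2 : ℝ) ^ a / Real.Gamma a * ((u / 2) ^ a / u) * Real.exp (-(1 / 2)) with hK
  have hK0 : 0 ≤ K := by positivity
  calc ENNReal.ofReal _ = ENNReal.ofReal (K * (u - u / 2)) := by
        congr 1
        rw [hK, show u / 2 = 1 / 2 * u by ring, Real.mul_rpow (by norm_num) hu.le]
        field_simp
        ring
    _ = ∫⁻ _ in Set.Icc (u / 2) u, ENNReal.ofReal K := by
        rw [setLIntegral_const, Real.volume_Icc, ENNReal.ofReal_mul hK0]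
    _ ≤ ∫⁻ x in Set.Icc (u / 2) u, gammaPDF a (1 / 2) x := by
        refine setLIntegral_mono' measurableSet_Icc ?_
        rintro x ⟨h1, h2⟩
        have hx : 0 < x := by linarith
        rw [gammaPDF_of_nonneg hx.le]
        apply ENNReal.ofReal_le_ofReal
        rw [hK, Real.rpow_sub_one hx.ne']
        gcongr
        linarith
    _ = gammaMeasure a (1 / 2) (Set.Icc (u / 2) u) := by
        rw [gammaMeasure, withDensity_apply _ measurableSet_Icc]
    _ ≤ _ := measure_mono Set.Icc_subset_Iic_self

/-- Deterministic core of Lemma 1: for `T ≥ 2` and `ε > 0`,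
`(1 − F((ε/n)^{2/T}))ⁿ → 0` as `n → ∞`, where `F` is the chi-square(T−1) CDF. -/
theorem stmt_12 (T : ℕ) (hT : 2 ≤ T) (ε : ℝ) (hε : 0 < ε) :
    Tendsto
      (fun n : ℕ =>
        (1 - chiSqCDF ((T : ℝ) - 1) ((ε / (n : ℝ)) ^ ((2 : ℝ) / (T : ℝ)))) ^ n)
      atTop (nhds 0) := by
  have hT' : (2 : ℝ) ≤ T := by exact_mod_cast hT
  have hT0 : (0 : ℝ) < T := by linarith
  have ha : 0 < ((T : ℝ) - 1) / 2 := by linarith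
  obtain ⟨c, hc, hF⟩ := chi_lower _ ha
  have : IsProbabilityMeasure (gammaMeasure (((T : ℝ) - 1) / 2) (1 / 2)) :=
    isProbabilityMeasure_gammaMeasure ha (by norm_num)
  have hle1 : ∀ u, chiSqCDF ((T : ℝ) - 1) u ≤ 1 := fun u => by
    unfold chiSqCDF chiSqMeasure
    exact measureReal_le_one
  have hlim : Tendsto (fun n : ℕ => Real.exp (-(c * ε ^ (((T : ℝ) - 1) / T) *
      (n : ℝ) ^ (1 / (T : ℝ))))) atTop (nhds 0) := by
    refine Real.tendsto_exp_neg_atTop_nhds_zero.comp ?_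
    refine Tendsto.const_mul_atTop (by positivity) ?_
    exact (tendsto_rpow_atTop (by positivity)).comp tendsto_natCast_atTop_atTop
  refine squeeze_zero' (Eventually.of_forall fun n => pow_nonneg (sub_nonneg.2 (hle1 _)) n) ?_ hlim
  filter_upwards [eventually_ge_atTop (max 1 ⌈ε⌉₊)] with n hn
  have hn1 : (1 : ℝ) ≤ n := by exact_mod_cast (le_max_left _ _).trans hn
  have hn0 : (0 : ℝ) < n := by linarith
  have hne : ε ≤ n := (Nat.le_ceil ε).trans (by exact_mod_cast (le_max_right _ _).trans hn)
  have hu0 : 0 < (ε / (n : ℝ)) ^ ((2 : ℝ) / (T : ℝ)) := by positivity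
  have hu1 : (ε / (n : ℝ)) ^ ((2 : ℝ) / (T : ℝ)) ≤ 1 :=
    Real.rpow_le_one (by positivity) ((div_le_one hn0).2 hne) (by positivity)
  have h := hF _ hu0 hu1
  change _ ≤ chiSqCDF ((T : ℝ) - 1) ((ε / (n : ℝ)) ^ ((2 : ℝ) / (T : ℝ))) at h
  have hexp : (2 : ℝ) / T * (((T : ℝ) - 1) / 2) = ((T : ℝ) - 1) / T := by field_simp
  rw [← Real.rpow_mul (by positivity), hexp, Real.div_rpow hε.le hn0.le] at h
  set F := chiSqCDF ((T : ℝ) - 1) ((ε / (n : ℝ)) ^ ((2 : ℝ) / (T : ℝ)))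
  have hpow : (n : ℝ) ^ (1 / (T : ℝ)) * (n : ℝ) ^ (((T : ℝ) - 1) / T) = n := by
    rw [← Real.rpow_add hn0, show 1 / (T : ℝ) + ((T : ℝ) - 1) / T = 1 by field_simp; ring,
      Real.rpow_one]
  have hP : 0 < (n : ℝ) ^ (((T : ℝ) - 1) / T) := by positivity
  have hmul : c * ε ^ (((T : ℝ) - 1) / T) * (n : ℝ) ^ (1 / (T : ℝ)) ≤ n * F := by
    calc _ = n * (c * (ε ^ (((T : ℝ) - 1) / T) / (n : ℝ) ^ (((T : ℝ) - 1) / T))) := by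
          rw [← mul_div_assoc, ← mul_div_assoc, eq_div_iff hP.ne', mul_assoc, hpow]
          ring
      _ ≤ _ := by gcongr
  calc (1 - F) ^ n ≤ (Real.exp (-F)) ^ n :=
        pow_le_pow_left₀ (sub_nonneg.2 (hle1 _)) (Real.one_sub_le_exp_neg F) n
    _ = Real.exp (-(n * F)) := by rw [← Real.exp_nat_mul]; ring_nf
    _ ≤ _ := Real.exp_le_exp.2 (neg_le_neg hmul)
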